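/- Let n = 15 and let σ be a generator of Gal(F_{q^15}/F_q). For a, b ∈ F_{q^15}, the F_q-dimension of the kernel of a·x + b·x^σ − x^{σ^4} equals 4 if and only if the following hold: N_{q^15/q}(a) = 1; q is even; and b = (σ^4(a)·σ^8(a)·σ^{12}(a))^{−1}. -/

import Mathlib

open Finset

lemma ker_comp_le {K V : Type*} [Field K] [AddCommGroup V] [Module K V] [FiniteDimensional K V]
    (Q g : V →ₗ[K] V) : Module.finrank K (LinearMap.ker (Q ∘ₗ g)) ≤
      Module.finrank K (LinearMap.ker Q) + Module.finrank K (LinearMap.ker g) := by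
  have h := LinearMap.finrank_range_add_finrank_ker (g.domRestrict (LinearMap.ker (Q ∘ₗ g)))
  have h1 : Module.finrank K (LinearMap.range (g.domRestrict (LinearMap.ker (Q ∘ₗ g)))) ≤
      Module.finrank K (LinearMap.ker Q) := by
    apply Submodule.finrank_mono
    rintro _ ⟨x, rfl⟩
    exact x.2
  have h2 : Module.finrank K (LinearMap.ker (g.domRestrict (LinearMap.ker (Q ∘ₗ g)))) ≤
      Module.finrank K (LinearMap.ker g) := by
    refine LinearMap.finrank_le_finrank_of_injective (f :=
      (((Submodule.subtype _) ∘ₗ (Submodule.subtype _)).codRestrict (LinearMap.ker g) ?_)) ?_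
    · intro c; exact c.2
    · intro x y hxy
      have := congrArg Subtype.val hxy
      exact Subtype.ext (Subtype.ext this)
  omega

noncomputable def spoly {K L : Type*} [Field K] [Field L] [Algebra K L] (σ : L ≃ₐ[K] L)
    (c : ℕ → L) (d : ℕ) : L →ₗ[K] L :=
  ∑ i ∈ range (d+1), LinearMap.mulLeft K (c i) ∘ₗ (σ ^ i : L ≃ₐ[K] L).toLinearMap

lemma spoly_apply {K L : Type*} [Field K] [Field L] [Algebra K L] (σ : L ≃ₐ[K] L)
    (c : ℕ → L) (d : ℕ) (x : L) : spoly σ c d x = ∑ i ∈ range (d+1), c i * (σ ^ i) x := by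
  simp [spoly]

lemma abel {L : Type*} [Field L] (e X : ℕ → L) (d : ℕ) :
    ∑ i ∈ range (d+1), (-(∑ j ∈ range (i+1), e j)) * (X (i+1) - X i)
      = ∑ i ∈ range (d+1+1), e i * X i - (∑ j ∈ range (d+1+1), e j) * X (d+1) := by
  induction d with
  | zero => simp [sum_range_succ]; ring
  | succ d ih =>
    rw [sum_range_succ, ih, sum_range_succ _ (d+1+1), sum_range_succ e (d+1+1)]
    ring

lemma ker_spoly {K L : Type*} [Field K] [Field L] [Algebra K L] [FiniteDimensional K L]
    (σ : L ≃ₐ[K] L) (hfix : ∀ x, σ x = x → ∃ y, algebraMap K L y = x) (d : ℕ) :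
    ∀ (c : ℕ → L), (∃ i, i ≤ d ∧ c i ≠ 0) →
    Module.finrank K (LinearMap.ker (spoly σ c d)) ≤ d := by
  induction d with
  | zero =>
    rintro c ⟨i, hi, hc⟩
    obtain rfl : i = 0 := by omega
    have : LinearMap.ker (spoly σ c 0) = ⊥ := by
      rw [LinearMap.ker_eq_bot']
      intro x hx
      rw [spoly_apply] at hx
      simpa [hc] using hx
    rw [this]; simp
  | succ d ih =>
    rintro c ⟨i, hi, hc⟩
    by_cases hb : LinearMap.ker (spoly σ c (d+1)) = ⊥
    · rw [hb]; simp
    obtain ⟨v, hv, hv0⟩ := (Submodule.ne_bot_iff _).1 hb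
    rw [LinearMap.mem_ker, spoly_apply] at hv
    set e : ℕ → L := fun i => c i * (σ ^ i) v with he
    set S : ℕ → L := fun i => -(∑ j ∈ range (i+1), e j) with hS
    have key : spoly σ c (d+1) ∘ₗ LinearMap.mulLeft K v
        = spoly σ S d ∘ₗ (σ.toLinearMap - LinearMap.id) := by
      ext x
      have h := abel e (fun i => (σ ^ i) x) d
      rw [show ∑ j ∈ range (d+1+1), e j = 0 from hv] at h
      simp only [LinearMap.comp_apply, spoly_apply]
      simp only [zero_mul, sub_zero] at h
      simp only [LinearMap.mulLeft_apply, map_mul, LinearMap.sub_apply, map_sub,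
        AlgEquiv.toLinearMap_apply, LinearMap.id_apply]
      calc _ = ∑ i ∈ range (d+1+1), e i * (σ ^ i) x := by
            apply sum_congr rfl; intros; simp only [he]; ring
        _ = _ := h.symm
    have hSne : ∃ i, i ≤ d ∧ S i ≠ 0 := by
      by_contra hcon
      push Not at hcon
      have hz : ∀ j, j ≤ d + 1 → ∑ j ∈ range (j+1), e j = 0 := by
        intro j hj
        rcases Nat.lt_or_ge d j with h | h
        · obtain rfl : j = d + 1 := by omega
          exact hv
        · simpa [hS] using hcon j h
      have hei : e i = 0 := by
        rcases i with _ | i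
        · simpa using hz 0 (by omega)
        · have := hz (i+1) hi
          rw [sum_range_succ, hz i (by omega)] at this
          simpa using this
      exact mul_ne_zero hc ((map_ne_zero _).2 hv0) hei
    have h1 : Module.finrank K (LinearMap.ker (σ.toLinearMap - LinearMap.id : L →ₗ[K] L)) ≤ 1 := by
      refine finrank_le_one (⟨1, by simp⟩) ?_
      rintro ⟨x, hx⟩
      obtain ⟨y, hy⟩ := hfix x (by simpa [sub_eq_zero] using hx)
      exact ⟨y, Subtype.ext (by simp [← hy, Algebra.algebraMap_eq_smul_one])⟩
    have h2 := ker_comp_le (spoly σ S d) (σ.toLinearMap - LinearMap.id : L →ₗ[K] L)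
    rw [← key] at h2
    have h3 : Module.finrank K (LinearMap.ker (spoly σ c (d+1))) ≤
        Module.finrank K (LinearMap.ker (spoly σ c (d+1) ∘ₗ LinearMap.mulLeft K v)) := by
      refine LinearMap.finrank_le_finrank_of_injective (f :=
        ((LinearMap.mulLeft K v⁻¹ ∘ₗ Submodule.subtype _).codRestrict _ ?_)) ?_
      · intro x
        rw [LinearMap.mem_ker]
        have := x.2
        rw [LinearMap.mem_ker] at this
        simpa [hv0] using this
      · intro x y hxy
        have := congrArg Subtype.val hxy
        simp [hv0] at this
        exact this
    have := ih S hSne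
    omega

lemma sig_pow {K L : Type*} [Field K] [Field L] [Algebra K L] (q s : ℕ)
    (σ : L ≃ₐ[K] L) (hσ : ∀ x : L, σ x = x ^ q ^ s) (x : L) (i : ℕ) :
    (σ ^ i) x = x ^ q ^ (i * s) := by
  induction i with
  | zero => simp
  | succ n ih => rw [pow_succ', AlgEquiv.mul_apply, ih, hσ, ← pow_mul, ← pow_add]; congr 2; ring

lemma pow_mod {L : Type*} [Field L] [Fintype L] (q : ℕ) (hL : Fintype.card L = q ^ 15) (x : L)
    (j : ℕ) : x ^ q ^ j = x ^ q ^ (j % 15) := by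
  conv_lhs => rw [← Nat.div_add_mod j 15, pow_add, pow_mul, pow_mul, ← hL, FiniteField.pow_card_pow]

lemma norm_eq {K L : Type*} [Field K] [Field L] [Fintype L] [Algebra K L] (q s : ℕ) (hq : 2 ≤ q)
    (hL : Fintype.card L = q ^ 15) (hs : Nat.gcd s 15 = 1)
    (σ : L ≃ₐ[K] L) (hσ : ∀ x : L, σ x = x ^ q ^ s) (x : L) :
    x ^ ((q ^ 15 - 1) / (q - 1)) = ∏ i ∈ range 15, (σ ^ i) x := by
  rw [← Nat.geomSum_eq hq, ← prod_pow_eq_pow_sum]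
  have h : ∀ i ∈ range 15, (σ ^ i) x = x ^ q ^ ((i * (s % 15)) % 15) := by
    intro i _
    rw [sig_pow q s σ hσ, pow_mod q hL]; simp [Nat.mul_mod]
  rw [prod_congr rfl h]
  have h1 : s % 15 < 15 := Nat.mod_lt _ (by norm_num)
  have h2 : Nat.gcd (s % 15) 15 = 1 := by rw [Nat.gcd_comm, Nat.gcd_rec] at hs; exact hs
  generalize s % 15 = r at *
  generalize hf : (fun j => x ^ q ^ j) = f
  have hf' : ∀ j, x ^ q ^ j = f j := fun j => by rw [← hf]
  simp only [hf']
  interval_cases r <;> first | (exfalso; revert h2; decide) | (simp [prod_range_succ]; try ring)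

lemma fixed_mem {K L : Type*} [Field K] [Field L] [Fintype K] [Fintype L] [Algebra K L] (q s : ℕ)
    (hK : Fintype.card K = q)
    (hL : Fintype.card L = q ^ 15) (hs : Nat.gcd s 15 = 1)
    (σ : L ≃ₐ[K] L) (hσ : ∀ x : L, σ x = x ^ q ^ s) (x : L) (hx : σ x = x) :
    ∃ y, algebraMap K L y = x := by
  have hi : ∀ i, (σ ^ i) x = x := by
    intro i
    induction i with
    | zero => simp
    | succ n ih => rw [pow_succ', AlgEquiv.mul_apply, ih, hx]
  obtain ⟨t, ht⟩ := Nat.exists_mul_mod_eq_one_of_coprime (k := 15) (n := s) hs (by norm_num)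
  have hxq : x ^ q = x := by
    have := hi t
    rw [sig_pow q s σ hσ, pow_mod q hL, mul_comm, ht.2] at this
    simpa using this
  have : IsGalois K L := inferInstance
  have := (IsGalois.mem_bot_iff_fixed (F := K) (E := L) x).2 (fun τ => by
    obtain ⟨n, rfl⟩ := (FiniteField.bijective_frobeniusAlgEquivOfAlgebraic_pow K L).2 τ
    have : ∀ m : ℕ, (FiniteField.frobeniusAlgEquivOfAlgebraic K L ^ m) x = x := by
      intro m
      induction m with
      | zero => simp
      | succ n ih => rw [pow_succ', AlgEquiv.mul_apply, ih]; simp [hK, hxq]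
    exact this _)
  exact this

lemma alg_fwd {L : Type*} [Field L] (σ : L →+* L) (A B : ℕ → L)
    (hAs : ∀ i, σ (A i) = A (i+1)) (hBs : ∀ i, σ (B i) = B (i+1))
    (hAm : ∀ i, A (i+15) = A i)
    (E0 : A 0 * (A 11 * A 7 * B 3 + A 11 * B 7 * A 4 + B 11 * A 8 * A 4) = 1)
    (E1 : B 0 * (A 11 * A 7 * B 3 + A 11 * B 7 * A 4 + B 11 * A 8 * A 4)
      + A 1 * (A 11 * B 7 * B 4 + B 11 * A 8 * B 4 + B 11 * B 8 * A 5) = 0)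
    (E2 : B 1 * (A 11 * B 7 * B 4 + B 11 * A 8 * B 4 + B 11 * B 8 * A 5)
      + A 2 * B 11 * B 8 * B 5 = 0)
    (E3 : A 11 * A 7 * A 3 + B 2 * B 11 * B 8 * B 5 = 0) :
    ∏ i ∈ range 15, A i = 1 ∧ (2 : L) = 0 ∧ B 0 = (A 4 * A 8 * A 12)⁻¹ := by
  have hAz : A 0 ≠ 0 := by rintro h; simp [h] at E0
  have hAnz : ∀ i, A i ≠ 0 := by
    intro i
    induction i with
    | zero => exact hAz
    | succ n ih => rw [← hAs]; exact (map_ne_zero σ).2 ih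
  have hBz : B 0 ≠ 0 := by
    intro h
    have h1 := hBs 0
    have h2 := hBs 1
    rw [h, map_zero] at h1
    norm_num at h1 h2
    rw [← h1, map_zero] at h2
    rw [← h2] at E3
    have := mul_ne_zero (mul_ne_zero (hAnz 11) (hAnz 7)) (hAnz 3)
    apply this
    simpa using E3
  have hBnz : ∀ i, B i ≠ 0 := by
    intro i
    induction i with
    | zero => exact hBz
    | succ n ih => rw [← hBs]; exact (map_ne_zero σ).2 ih
  obtain ⟨c, hc⟩ : ∃ c : ℕ → L, ∀ i, c i = B i * A (i+4) * A (i+8) * A (i+12) := ⟨_, fun _ => rfl⟩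
  have hcs : ∀ i, σ (c i) = c (i+1) := by
    intro i
    simp only [hc, map_mul, hAs, hBs]
  have hcnz : ∀ i, c i ≠ 0 := by
    intro i; rw [hc]
    exact mul_ne_zero (mul_ne_zero (mul_ne_zero (hBnz _) (hAnz _)) (hAnz _)) (hAnz _)
  have a15 : A 15 = A 0 := hAm 0
  have a16 : A 16 = A 1 := hAm 1
  have a17 : A 17 = A 2 := hAm 2
  have a19 : A 19 = A 4 := hAm 4
  have a20 : A 20 = A 5 := hAm 5
  have a23 : A 23 = A 8 := hAm 8
  set N := ∏ i ∈ range 15, A i with hN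
  have hN' : N = A 0 * A 1 * A 2 * A 3 * A 4 * A 5 * A 6 * A 7 * A 8 * A 9 * A 10 * A 11 * A 12
      * A 13 * A 14 := by simp [hN, prod_range_succ]
  have hσN : σ N = N := by
    rw [hN']; simp only [map_mul, hAs]; norm_num [a15]; try ring
  have P1 : B 0 + A 0 * A 1 * (A 11 * B 7 * B 4 + B 11 * A 8 * B 4 + B 11 * B 8 * A 5) = 0 := by
    linear_combination A 0 * E1 - B 0 * E0
  have P2 : B 0 * B 1 = A 0 * A 1 * A 2 * (B 11 * B 8 * B 5) := by
    linear_combination B 1 * P1 - A 0 * A 1 * E2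
  have P3 : B 0 * B 1 * B 2 = - (A 0 * A 1 * A 2 * A 3 * A 7 * A 11) := by
    linear_combination B 2 * P2 + A 0 * A 1 * A 2 * E3
  have C4 : c 0 * c 1 * c 2 = - N := by
    rw [hN']; simp only [hc]; norm_num
    linear_combination A 4 * A 8 * A 12 * (A 5 * A 9 * A 13) * (A 6 * A 10 * A 14) * P3
  have C1 : c 3 + c 7 + c 11 = 1 := by
    simp only [hc]; norm_num [a15, a19, a23]
    linear_combination E0
  have C2 : c 0 + c 7 * c 4 + c 11 * c 4 + c 11 * c 8 = 0 := by
    simp only [hc]; norm_num [a15, a16, a19, a20, a23]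
    linear_combination A 4 * A 8 * A 12 * P1
  have C3 : c 0 * c 1 = c 5 * c 8 * c 11 := by
    simp only [hc]; norm_num [a15, a16, a17, a19, a20, a23]
    linear_combination A 4 * A 8 * A 12 * A 5 * A 9 * A 13 * P2
  have c3 : c 3 = c 0 := by
    have h := congrArg σ C4
    simp only [map_mul, map_neg, hcs, hσN] at h
    norm_num at h
    rw [← C4] at h
    apply mul_left_cancel₀ (mul_ne_zero (hcnz 1) (hcnz 2))
    linear_combination h
  have c4 : c 4 = c 1 := by rw [← hcs 3, c3, hcs]
  have c5 : c 5 = c 2 := by rw [← hcs 4, c4, hcs]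
  have c6 : c 6 = c 0 := by rw [← hcs 5, c5, hcs, c3]
  have c7 : c 7 = c 1 := by rw [← hcs 6, c6, hcs]
  have c8 : c 8 = c 2 := by rw [← hcs 7, c7, hcs]
  have c9 : c 9 = c 0 := by rw [← hcs 8, c8, hcs, c3]
  have c10 : c 10 = c 1 := by rw [← hcs 9, c9, hcs]
  have c11 : c 11 = c 2 := by rw [← hcs 10, c10, hcs]
  rw [c3, c7, c11] at C1
  rw [c7, c4, c11, c8] at C2
  rw [c5, c8, c11] at C3
  have s0 := hcs 0
  have s1 := hcs 1
  have s2 := hcs 2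
  norm_num [c3] at s0 s1 s2
  have hb : c 0 = 1 → B 0 = (A 4 * A 8 * A 12)⁻¹ := by
    intro h
    rw [hc] at h
    norm_num at h
    apply eq_inv_of_mul_eq_one_left
    linear_combination h
  have z0 := hcnz 2
  generalize c 0 = x at *
  generalize c 1 = y at *
  generalize c 2 = z at *
  obtain rfl : x = 1 - y - z := by linear_combination C1
  have e2 : (1 - y - z) * y + (1 - y - z) * z + y * z = 1 := by linear_combination -C2
  have n1 : N = -1 := by
    apply mul_left_cancel₀ z0
    have hz : z ^ 3 - z ^ 2 + z + N = 0 := by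
      linear_combination - z * e2 + C4
    linear_combination (1+z) * hz + z * C3 - C4
  have hz : (z - 1) * (z ^ 2 + 1) = 0 := by
    linear_combination - z * e2 + C4 - n1
  have hx1 : z = 1 → 1 - y - z = 1 ∧ y = 1 := by
    intro h
    rw [h, map_one] at s2
    rw [h, ← s2, map_one] at s0
    constructor
    · rw [h]; exact s2.symm
    · exact s0.symm
  have hz1 : z = 1 := by
    rcases mul_eq_zero.1 hz with h | h
    · linear_combination h
    · have hx := congrArg σ h
      simp only [map_add, map_pow, s2, map_one, map_zero] at hx
      have hy := congrArg σ hx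
      simp only [map_add, map_pow, s0, map_one, map_zero] at hy
      have h2 : (2 : L) = 0 := by
        linear_combination h + hx + hy + 2 * e2
      have : (z - 1) ^ 2 = 0 := by linear_combination h - z * h2
      exact sub_eq_zero.1 (pow_eq_zero_iff (by norm_num) |>.1 this)
  obtain ⟨hx, hy⟩ := hx1 hz1
  have h2 : (2 : L) = 0 := by linear_combination -hx - hy - hz1
  exact ⟨by linear_combination n1 - h2, h2, hb hx⟩

lemma alg_bwd {L : Type*} [Field L] (A B : ℕ → L) (hA : ∀ i, A i ≠ 0)
    (hAm : ∀ i, A (i+15) = A i) (h2 : (2 : L) = 0) (hN : ∏ i ∈ range 15, A i = 1)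
    (hc : ∀ i, B i * A (i+4) * A (i+8) * A (i+12) = 1) :
    (A 0 * (A 11 * A 7 * B 3 + A 11 * B 7 * A 4 + B 11 * A 8 * A 4) = 1) ∧
    (B 0 * (A 11 * A 7 * B 3 + A 11 * B 7 * A 4 + B 11 * A 8 * A 4)
      + A 1 * (A 11 * B 7 * B 4 + B 11 * A 8 * B 4 + B 11 * B 8 * A 5) = 0) ∧
    (B 1 * (A 11 * B 7 * B 4 + B 11 * A 8 * B 4 + B 11 * B 8 * A 5)
      + A 2 * B 11 * B 8 * B 5 = 0) ∧
    (A 11 * A 7 * A 3 + B 2 * B 11 * B 8 * B 5 = 0) := by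
  have a15 : A 15 = A 0 := hAm 0
  have a16 : A 16 = A 1 := hAm 1
  have a17 : A 17 = A 2 := hAm 2
  have a19 : A 19 = A 4 := hAm 4
  have a20 : A 20 = A 5 := hAm 5
  have a23 : A 23 = A 8 := hAm 8
  have hN' : A 0 * A 1 * A 2 * A 3 * A 4 * A 5 * A 6 * A 7 * A 8 * A 9 * A 10 * A 11 * A 12
      * A 13 * A 14 = 1 := by rw [← hN]; simp [prod_range_succ]
  have c0 := hc 0
  have c1 := hc 1
  have c2 := hc 2
  have c3 := hc 3
  have c4 := hc 4
  have c5 := hc 5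
  have c7 := hc 7
  have c8 := hc 8
  have c11 := hc 11
  simp only [Nat.reduceAdd, zero_add, a15, a16, a17, a19, a20, a23] at c0 c1 c2 c3 c4 c5 c7 c8 c11
  have E0 : A 0 * (A 11 * A 7 * B 3 + A 11 * B 7 * A 4 + B 11 * A 8 * A 4) = 1 := by
    linear_combination c3 + c7 + c11 + h2
  have P1 : B 0 + A 0 * A 1 * (A 11 * B 7 * B 4 + B 11 * A 8 * B 4 + B 11 * B 8 * A 5) = 0 := by
    apply mul_left_cancel₀ (mul_ne_zero (mul_ne_zero (hA 4) (hA 8)) (hA 12))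
    have t1 := congrArg₂ (· * ·) c7 c4
    have t2 := congrArg₂ (· * ·) c11 c4
    have t3 := congrArg₂ (· * ·) c11 c8
    linear_combination c0 + t1 + t2 + t3 + 2 * h2
  refine ⟨E0, ?_, ?_, ?_⟩
  · apply mul_left_cancel₀ (hA 0)
    linear_combination P1 + B 0 * E0
  · apply mul_left_cancel₀ (mul_ne_zero (hA 0) (hA 1))
    apply mul_left_cancel₀ (mul_ne_zero (mul_ne_zero (hA 4) (hA 8)) (hA 12))
    apply mul_left_cancel₀ (mul_ne_zero (mul_ne_zero (hA 5) (hA 9)) (hA 13))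
    have t1 := congrArg₂ (· * ·) c0 c1
    have t2 := congrArg₂ (· * ·) (congrArg₂ (· * ·) c5 c8) c11
    linear_combination (A 4 * A 8 * A 12) * (A 5 * A 9 * A 13) * B 1 * P1 - t1 + t2
  · apply mul_left_cancel₀ (mul_ne_zero (mul_ne_zero (hA 6) (hA 10)) (hA 14))
    apply mul_left_cancel₀ (mul_ne_zero (mul_ne_zero (hA 0) (hA 4)) (hA 8))
    apply mul_left_cancel₀ (mul_ne_zero (mul_ne_zero (hA 12) (hA 1)) (hA 5))
    apply mul_left_cancel₀ (mul_ne_zero (mul_ne_zero (hA 9) (hA 13)) (hA 2))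
    have t2 := congrArg₂ (· * ·) (congrArg₂ (· * ·) c5 c8) (congrArg₂ (· * ·) c11 c2)
    linear_combination hN' + t2 + h2

theorem stmt_14 (p q : ℕ) (hp : p.Prime) (hq : ∃ m : ℕ, 0 < m ∧ q = p ^ m)
    (K L : Type*) [Field K] [Field L] [Fintype K] [Fintype L] [Algebra K L]
    (hcardK : Fintype.card K = q) (hcardL : Fintype.card L = q ^ 15)
    (s : ℕ) (hs : 0 < s) (hsn : Nat.gcd s 15 = 1)
    (σ : L ≃ₐ[K] L) (hσ : ∀ x : L, σ x = x ^ q ^ s)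
    (a b : L) :
    Module.finrank K
      (LinearMap.ker
        (LinearMap.mulLeft K a + LinearMap.mulLeft K b ∘ₗ σ.toLinearMap
          - (σ ^ 4 : L ≃ₐ[K] L).toLinearMap)) = 4
      ↔ (a ^ ((q ^ 15 - 1) / (q - 1)) = 1
          ∧ Even q
          ∧ b = ((σ ^ 4) a * (σ ^ 8) a * (σ ^ 12) a)⁻¹) := by
  have hq2 : 2 ≤ q := by rw [← hcardK]; exact Fintype.one_lt_card
  have hchar : (q : L) = 0 := by
    have : ((Fintype.card K : ℕ) : K) = 0 := FiniteField.cast_card_eq_zero K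
    rw [hcardK] at this
    simpa using congrArg (algebraMap K L) this
  have heven : Even q ↔ (2 : L) = 0 := by
    constructor
    · intro he
      obtain ⟨m, hm, rfl⟩ := hq
      have h2 : p = 2 := (hp.even_iff).1 ((Nat.even_pow.1 he).1)
      subst h2
      rw [Nat.cast_pow] at hchar
      exact_mod_cast pow_eq_zero_iff (by omega) |>.1 hchar
    · intro h2
      by_contra ho
      obtain ⟨k, hk⟩ := Nat.not_even_iff_odd.1 ho
      rw [hk] at hchar
      push_cast at hchar
      rw [h2] at hchar
      simp at hchar
  have hfix := fixed_mem q s hcardK hcardL hsn σ hσ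
  rw [norm_eq q s hq2 hcardL hsn σ hσ, heven]
  have h15 : ∀ x : L, (σ ^ 15) x = x := fun x => by
    rw [sig_pow q s σ hσ, pow_mod q hcardL]; simp
  have hmod : ∀ (i : ℕ) (x : L), (σ ^ (i + 15)) x = (σ ^ i) x := fun i x => by
    rw [pow_add, AlgEquiv.mul_apply, h15]
  have hdim : Module.finrank K L = 15 := by
    have := Module.card_eq_pow_finrank (K := K) (V := L)
    rw [hcardK, hcardL] at this
    exact (Nat.pow_right_injective hq2 this).symm
  clear hs hsn hσ hp hq heven hchar hcardK hcardL
  set f := (LinearMap.mulLeft K a + LinearMap.mulLeft K b ∘ₗ σ.toLinearMap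
          - (σ ^ 4 : L ≃ₐ[K] L).toLinearMap) with hf
  have hfa : ∀ x, f x = a * x + b * σ x - (σ ^ 4) x := fun x => by simp [hf]
  -- shifted values
  obtain ⟨A, hA⟩ : ∃ A : ℕ → L, ∀ i, A i = (σ ^ i) a := ⟨_, fun i => rfl⟩
  obtain ⟨B, hB⟩ : ∃ B : ℕ → L, ∀ i, B i = (σ ^ i) b := ⟨_, fun i => rfl⟩
  have hA0 : a = A 0 := by simp [hA]
  have hB0 : b = B 0 := by simp [hB]
  have hAs : ∀ i, σ (A i) = A (i+1) := fun i => by rw [hA, hA, pow_succ', AlgEquiv.mul_apply]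
  have hBs : ∀ i, σ (B i) = B (i+1) := fun i => by rw [hB, hB, pow_succ', AlgEquiv.mul_apply]
  have hAm : ∀ i, A (i+15) = A i := fun i => by rw [hA, hA, hmod]
  have hBm : ∀ i, B (i+15) = B i := fun i => by rw [hB, hB, hmod]
  have hfj : ∀ (j : ℕ) x, (σ ^ j) (f x) = A j * (σ ^ j) x + B j * (σ ^ (j+1)) x - (σ ^ (j+4)) x := by
    intro j x
    rw [hfa, map_sub, map_add, map_mul, map_mul, hA, hB, pow_succ σ j, pow_add σ j 4]
    rfl
  have hnz : (∏ i ∈ range 15, (σ ^ i) a = 1) → a ≠ 0 := by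
    rintro h rfl
    simp [prod_range_succ] at h
  simp only [← hA] at hnz ⊢
  rw [hB0]
  have hAnz : a ≠ 0 → ∀ i, A i ≠ 0 := fun h i => by rw [hA]; exact (map_ne_zero _).2 h
  have hker : ∀ (d : ℕ) (c : ℕ → L), (∃ i, i ≤ d ∧ c i ≠ 0) →
    Module.finrank K (LinearMap.ker (spoly σ c d)) ≤ d := ker_spoly σ hfix
  have hrem : ∀ x, x =
      (A 0 * (A 11 * A 7 * B 3 + A 11 * B 7 * A 4 + B 11 * A 8 * A 4)) * x
      + (B 0 * (A 11 * A 7 * B 3 + A 11 * B 7 * A 4 + B 11 * A 8 * A 4)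
      + A 1 * (A 11 * B 7 * B 4 + B 11 * A 8 * B 4 + B 11 * B 8 * A 5)) * (σ ^ 1) x
      + (B 1 * (A 11 * B 7 * B 4 + B 11 * A 8 * B 4 + B 11 * B 8 * A 5)
      + A 2 * B 11 * B 8 * B 5) * (σ ^ 2) x
      + (A 11 * A 7 * A 3 + B 2 * B 11 * B 8 * B 5) * (σ ^ 3) x
      - ((σ ^ 11) (f x) + A 11 * (σ ^ 7) (f x) + B 11 * (σ ^ 8) (f x) + A 11 * A 7 * 0
        + (A 11 * A 7 * B 3 + A 11 * B 7 * A 4 + B 11 * A 8 * A 4) * (σ ^ 0) (f x)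
        + (A 11 * B 7 * B 4 + B 11 * A 8 * B 4 + B 11 * B 8 * A 5) * (σ ^ 1) (f x)
        + B 11 * B 8 * B 5 * (σ ^ 2) (f x)
        + A 11 * A 7 * (σ ^ 3) (f x) + (A 11 * B 7 + B 11 * A 8) * (σ ^ 4) (f x)
        + B 11 * B 8 * (σ ^ 5) (f x)) := by
    intro x
    simp only [hfj, Nat.reduceAdd, h15]
    rw [pow_zero, AlgEquiv.one_apply]
    ring
  constructor
  · intro hd
    have hall : ∀ r0 r1 r2 r3 : L,
        (∀ x, f x = 0 → r0 * x + r1 * (σ ^ 1) x + r2 * (σ ^ 2) x + r3 * (σ ^ 3) x = 0) →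
        r0 = 0 ∧ r1 = 0 ∧ r2 = 0 ∧ r3 = 0 := by
      intro r0 r1 r2 r3 h
      by_contra hcon
      let c : ℕ → L := fun i => if i = 0 then r0 else if i = 1 then r1 else if i = 2 then r2 else r3
      have h1 := hker 3 c (by
        by_contra hne
        push Not at hne
        exact hcon ⟨hne 0 (by norm_num), hne 1 (by norm_num), hne 2 (by norm_num),
          hne 3 (by norm_num)⟩)
      have h2 : LinearMap.ker f ≤ LinearMap.ker (spoly σ c 3) := by
        intro x hx
        rw [LinearMap.mem_ker] at hx ⊢
        rw [spoly_apply, ← h x hx]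
        simp [sum_range_succ, c]
      have := Submodule.finrank_mono h2
      omega
    obtain ⟨E0, E1, E2, E3⟩ := hall
      (A 0 * (A 11 * A 7 * B 3 + A 11 * B 7 * A 4 + B 11 * A 8 * A 4) - 1)
      (B 0 * (A 11 * A 7 * B 3 + A 11 * B 7 * A 4 + B 11 * A 8 * A 4)
      + A 1 * (A 11 * B 7 * B 4 + B 11 * A 8 * B 4 + B 11 * B 8 * A 5))
      (B 1 * (A 11 * B 7 * B 4 + B 11 * A 8 * B 4 + B 11 * B 8 * A 5)
      + A 2 * B 11 * B 8 * B 5)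
      (A 11 * A 7 * A 3 + B 2 * B 11 * B 8 * B 5) (fun x hx => by
      have := hrem x
      simp only [hx, map_zero, mul_zero, add_zero, sub_zero] at this
      linear_combination -this)
    exact alg_fwd (σ : L →+* L) A B (fun i => hAs i) (fun i => hBs i) hAm
      (sub_eq_zero.1 E0) E1 E2 E3
  · rintro ⟨hN, h2, hb⟩
    have hA' := hAnz (hnz hN)
    have hc : ∀ i, B i * A (i+4) * A (i+8) * A (i+12) = 1 := by
      intro i
      induction i with
      | zero =>
        rw [hb]
        have := hA' 4
        have := hA' 8
        have := hA' 12
        field_simp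
      | succ n ih =>
        have := congrArg σ ih
        simp only [map_mul, hAs, hBs, map_one] at this
        rw [← this]
    obtain ⟨E0, E1, E2, E3⟩ := alg_bwd A B hA' hAm h2 hN hc
    apply le_antisymm
    · let c : ℕ → L := fun i => if i = 0 then a else if i = 1 then b else if i = 4 then -1 else 0
      have h1 := hker 4 c ⟨4, le_rfl, by simp [c]⟩
      have h2 : spoly σ c 4 = f := by
        ext x
        rw [spoly_apply, hfa]
        simp [sum_range_succ, c]
        try ring
      rwa [h2] at h1
    · let c : ℕ → L := fun i => if i = 11 then 1 else if i = 7 then A 11 else if i = 8 then B 11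
        else if i = 0 then A 11 * A 7 * B 3 + A 11 * B 7 * A 4 + B 11 * A 8 * A 4
        else if i = 1 then A 11 * B 7 * B 4 + B 11 * A 8 * B 4 + B 11 * B 8 * A 5
        else if i = 2 then B 11 * B 8 * B 5 else if i = 3 then A 11 * A 7
        else if i = 4 then A 11 * B 7 + B 11 * A 8 else if i = 5 then B 11 * B 8 else 0
      have h1 := hker 11 c ⟨11, le_rfl, by simp [c]⟩
      have h2 : LinearMap.range f ≤ LinearMap.ker (spoly σ c 11) := by
        rintro _ ⟨x, rfl⟩
        rw [LinearMap.mem_ker, spoly_apply]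
        have h := hrem x
        rw [E0, E1, E2, E3] at h
        generalize f x = y at h ⊢
        simp only [sum_range_succ, range_zero, sum_empty, c]
        norm_num only [if_true, if_false]
        linear_combination h
      have h3 := Submodule.finrank_mono h2
      have h4 := LinearMap.finrank_range_add_finrank_ker f
      omega
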